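/- For Ψ ∈ Λ^k(U,𝔥) and Φ ∈ Λ¹(U,𝔥), one has (Φ∧Φ) ∧^{,} Ψ = Φ ∧^{,} (Φ ∧^{[,]} Ψ) + α(Φ) ∧^▷ (Φ ∧^{,} Ψ). -/

import Mathlib

open scoped TensorProduct

noncomputable section

/-- `V`-valued `k`-forms on `ℝⁿ` (to be considered on an open set `U ⊆ ℝⁿ`):
fields of alternating `k`-multilinear maps, i.e. `Λᵏ(U, V)`. -/
abbrev Form (n k : ℕ) (V : Type*) [AddCommGroup V] [Module ℝ V] :=
  (Fin n → ℝ) → ((Fin n → ℝ) [⋀^Fin k]→ₗ[ℝ] V)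

/-- A form is smooth on `U` if all of its scalar components are `C^∞` on `U`. -/
def SmoothFormOn {n k : ℕ} {V : Type*} [NormedAddCommGroup V] [NormedSpace ℝ V]
    (U : Set (Fin n → ℝ)) (ω : Form n k V) : Prop :=
  ∀ v : Fin k → (Fin n → ℝ), ContDiffOn ℝ (⊤ : ℕ∞) (fun x => ω x v) U

/-- Wedge product of vector valued forms along a bilinear pairing `β`:
writing `ω = Σ ωᵃ Xₐ` and `η = Σ ηᵇ Y_b`, `ω ∧^β η = Σ ωᵃ ∧ ηᵇ β Xₐ Y_b`. -/
def wedgeB {n k l : ℕ} {V W X : Type*} [AddCommGroup V] [Module ℝ V]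
    [AddCommGroup W] [Module ℝ W] [AddCommGroup X] [Module ℝ X]
    (β : V →ₗ[ℝ] W →ₗ[ℝ] X) (ω : Form n k V) (η : Form n l W) : Form n (k + l) X :=
  fun x => (TensorProduct.lift β).compAlternatingMap
    (((ω x).domCoprod (η x)).domDomCongr finSumFinEquiv)

/-- Apply a linear map (such as `α` or `δ`) to a vector valued form componentwise. -/
def mapV {n k : ℕ} {V W : Type*} [AddCommGroup V] [Module ℝ V]
    [AddCommGroup W] [Module ℝ W] (f : V →ₗ[ℝ] W) (ω : Form n k V) : Form n k W :=
  fun x => f.compAlternatingMap (ω x)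

/-- Reinterpret a `k`-form as an `l`-form along a proof of `k = l`. -/
def castD {n k l : ℕ} {V : Type*} [AddCommGroup V] [Module ℝ V]
    (h : k = l) (ω : Form n k V) : Form n l V :=
  fun x => (ω x).domDomCongr (finCongr h)

/-- The commutator bracket `[x, y] = x*y - y*x` of a matrix (associative) algebra,
as a bilinear map. -/
def lieB (H : Type*) [Ring H] [Algebra ℝ H] : H →ₗ[ℝ] H →ₗ[ℝ] H :=
  LinearMap.mul ℝ H - (LinearMap.mul ℝ H).flip

/-- A differential 2-crossed module `𝔩 →δ 𝔥 →α 𝔤` of matrix Lie algebras (realized as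
associative `ℝ`-algebras, with the commutator bracket `⁅x, y⁆ = x*y - y*x`), with
left actions `▷` of `𝔤` on `𝔥` and on `𝔩` by derivations (and on `𝔤` by the adjoint
action) and a `𝔤`-equivariant bilinear Peiffer lifting `{,} : 𝔥 × 𝔥 → 𝔩`. -/
structure TwoCrossed (𝔤 𝔥 𝔩 : Type*) [Ring 𝔤] [Algebra ℝ 𝔤] [Ring 𝔥] [Algebra ℝ 𝔥]
    [Ring 𝔩] [Algebra ℝ 𝔩] where
  /-- the Lie algebra homomorphism `δ : 𝔩 → 𝔥` -/
  δ : 𝔩 →ₗ[ℝ] 𝔥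
  /-- the Lie algebra homomorphism `α : 𝔥 → 𝔤` -/
  α : 𝔥 →ₗ[ℝ] 𝔤
  /-- the action `▷` of `𝔤` on `𝔥` -/
  ρ𝔥 : 𝔤 →ₗ[ℝ] 𝔥 →ₗ[ℝ] 𝔥
  /-- the action `▷` of `𝔤` on `𝔩` -/
  ρ𝔩 : 𝔤 →ₗ[ℝ] 𝔩 →ₗ[ℝ] 𝔩
  /-- the Peiffer lifting `{,} : 𝔥 × 𝔥 → 𝔩` -/
  pf : 𝔥 →ₗ[ℝ] 𝔥 →ₗ[ℝ] 𝔩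
  δ_lie : ∀ x y : 𝔩, δ ⁅x, y⁆ = ⁅δ x, δ y⁆
  α_lie : ∀ u v : 𝔥, α ⁅u, v⁆ = ⁅α u, α v⁆
  /-- `𝔤` acts on `𝔥` by derivations -/
  ρ𝔥_deriv : ∀ (X : 𝔤) (u v : 𝔥), ρ𝔥 X ⁅u, v⁆ = ⁅ρ𝔥 X u, v⁆ + ⁅u, ρ𝔥 X v⁆
  /-- `▷` is a Lie algebra action of `𝔤` on `𝔥` -/
  ρ𝔥_lie : ∀ (X Y : 𝔤) (u : 𝔥), ρ𝔥 ⁅X, Y⁆ u = ρ𝔥 X (ρ𝔥 Y u) - ρ𝔥 Y (ρ𝔥 X u)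
  /-- `𝔤` acts on `𝔩` by derivations -/
  ρ𝔩_deriv : ∀ (X : 𝔤) (x y : 𝔩), ρ𝔩 X ⁅x, y⁆ = ⁅ρ𝔩 X x, y⁆ + ⁅x, ρ𝔩 X y⁆
  /-- `▷` is a Lie algebra action of `𝔤` on `𝔩` -/
  ρ𝔩_lie : ∀ (X Y : 𝔤) (x : 𝔩), ρ𝔩 ⁅X, Y⁆ x = ρ𝔩 X (ρ𝔩 Y x) - ρ𝔩 Y (ρ𝔩 X x)
  /-- the Peiffer lifting is `𝔤`-equivariant: `X ▷ {u,v} = {X ▷ u, v} + {u, X ▷ v}` -/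
  pf_equivariant : ∀ (X : 𝔤) (u v : 𝔥), ρ𝔩 X (pf u v) = pf (ρ𝔥 X u) v + pf u (ρ𝔥 X v)
  /-- `δ` is `𝔤`-equivariant -/
  δ_equivariant : ∀ (X : 𝔤) (x : 𝔩), δ (ρ𝔩 X x) = ρ𝔥 X (δ x)
  /-- `α` is `𝔤`-equivariant (`𝔤` acting on itself by the adjoint action) -/
  α_equivariant : ∀ (X : 𝔤) (u : 𝔥), α (ρ𝔥 X u) = ⁅X, α u⁆
  /-- `𝔩 →δ 𝔥 →α 𝔤` is a complex -/
  comp_zero : ∀ x : 𝔩, α (δ x) = 0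
  /-- axiom (2): `δ{u, v} = ⟨u, v⟩ = [u, v] - α(u) ▷ v` -/
  ax2 : ∀ u v : 𝔥, δ (pf u v) = ⁅u, v⁆ - ρ𝔥 (α u) v
  /-- axiom (3): `[x, y] = {δ x, δ y}` for `x, y ∈ 𝔩` -/
  ax3 : ∀ x y : 𝔩, pf (δ x) (δ y) = ⁅x, y⁆
  /-- axiom (4): `{[u,v], w} = α(u)▷{v,w} + {u,[v,w]} - α(v)▷{u,w} - {v,[u,w]}` -/
  ax4 : ∀ u v w : 𝔥, pf ⁅u, v⁆ w =
    ρ𝔩 (α u) (pf v w) + pf u ⁅v, w⁆ - ρ𝔩 (α v) (pf u w) - pf v ⁅u, w⁆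
  /-- axiom (5): `{u, [v,w]} = {δ{u,v}, w} - {δ{u,w}, v}` -/
  ax5 : ∀ u v w : 𝔥, pf u ⁅v, w⁆ = pf (δ (pf u v)) w - pf (δ (pf u w)) v
  /-- axiom (6): `{δ x, v} + {v, δ x} = -α(v) ▷ x` -/
  ax6 : ∀ (x : 𝔩) (v : 𝔥), pf (δ x) v + pf v (δ x) = - ρ𝔩 (α v) x

namespace TwoCrossed

variable {𝔤 𝔥 𝔩 : Type*} [Ring 𝔤] [Algebra ℝ 𝔤] [Ring 𝔥] [Algebra ℝ 𝔥] [Ring 𝔩] [Algebra ℝ 𝔩]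

/-- The Peiffer commutator pairing `⟨u, v⟩ := [u, v] - α(u) ▷ v`, bilinearly. -/
def ang (T : TwoCrossed 𝔤 𝔥 𝔩) : 𝔥 →ₗ[ℝ] 𝔥 →ₗ[ℝ] 𝔥 :=
  (LinearMap.mul ℝ 𝔥 - (LinearMap.mul ℝ 𝔥).flip) - T.ρ𝔥 ∘ₗ T.α

/-- The action `v ▷' x := -{δ x, v}` of `𝔥` on `𝔩`, bilinearly. -/
def rhoPrime (T : TwoCrossed 𝔤 𝔥 𝔩) : 𝔥 →ₗ[ℝ] 𝔩 →ₗ[ℝ] 𝔩 :=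
  - (T.pf ∘ₗ T.δ).flip

end TwoCrossed

namespace MultilinearMap

variable {R M N V W X ι ι' : Type*} [CommRing R] [AddCommGroup M] [Module R M]
  [AddCommGroup N] [Module R N] [AddCommGroup V] [Module R V] [AddCommGroup W] [Module R W]
  [AddCommGroup X] [Module R X]

theorem alternatization_domDomCongr [Fintype ι] [DecidableEq ι] [Fintype ι'] [DecidableEq ι']
    (e : ι ≃ ι') (m : MultilinearMap R (fun _ : ι => M) N) :
    alternatization (m.domDomCongr e) = (alternatization m).domDomCongr e := by
  ext v
  simp only [alternatization_apply, AlternatingMap.domDomCongr_apply]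
  refine (Fintype.sum_equiv e.permCongr _ _ fun σ => ?_).symm
  simp [Equiv.Perm.sign_permCongr, Function.comp_def]

theorem alternatization_domDomCongr_perm [Fintype ι] [DecidableEq ι]
    (σ : Equiv.Perm ι) (m : MultilinearMap R (fun _ : ι => M) N) :
    alternatization (m.domDomCongr σ) = Equiv.Perm.sign σ • alternatization m := by
  rw [alternatization_domDomCongr, AlternatingMap.domDomCongr_perm]

/-- The concatenation product of two multilinear maps along a bilinear pairing `β`. -/
def prodAlong {k l : ℕ} (β : V →ₗ[R] W →ₗ[R] X) (a : MultilinearMap R (fun _ : Fin k => M) V)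
    (b : MultilinearMap R (fun _ : Fin l => M) W) :
    MultilinearMap R (fun _ : Fin (k + l) => M) X :=
  (TensorProduct.lift β).compMultilinearMap ((a.domCoprod b).domDomCongr finSumFinEquiv)

@[simp]
theorem prodAlong_apply {k l : ℕ} (β : V →ₗ[R] W →ₗ[R] X)
    (a : MultilinearMap R (fun _ : Fin k => M) V) (b : MultilinearMap R (fun _ : Fin l => M) W)
    (v : Fin (k + l) → M) :
    prodAlong β a b v
      = β (a fun i => v (Fin.castAdd l i)) (b fun i => v (Fin.natAdd k i)) := by
  simp [prodAlong]

theorem alternatization_prodAlong {k l : ℕ} (β : V →ₗ[R] W →ₗ[R] X)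
    (a : MultilinearMap R (fun _ : Fin k => M) V) (b : MultilinearMap R (fun _ : Fin l => M) W) :
    alternatization (prodAlong β a b) = (TensorProduct.lift β).compAlternatingMap
      (((alternatization a).domCoprod (alternatization b)).domDomCongr finSumFinEquiv) := by
  rw [prodAlong, LinearMap.compMultilinearMap_alternatization, alternatization_domDomCongr,
    domCoprod_alternization]

/-- Over `ℝ`, the alternatization only depends on the antisymmetrization in two slots. -/
theorem alternatization_eq_of_sub_swap_eq {M N : Type*} [AddCommGroup M] [Module ℝ M]
    [AddCommGroup N] [Module ℝ N] [Fintype ι] [DecidableEq ι]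
    {a b : MultilinearMap ℝ (fun _ : ι => M) N} {i j : ι} (hij : i ≠ j)
    (h : a - a.domDomCongr (Equiv.swap i j) = b - b.domDomCongr (Equiv.swap i j)) :
    alternatization a = alternatization b := by
  have h' := congrArg alternatization h
  simp only [map_sub, alternatization_domDomCongr_perm, Equiv.Perm.sign_swap hij, Units.neg_smul,
    one_smul, sub_neg_eq_add, ← two_smul ℝ] at h'
  exact smul_right_injective _ (two_ne_zero (α := ℝ)) h'

end MultilinearMap

open MultilinearMap in
theorem AlternatingMap.exists_alternatization_eq {M N : Type*} [AddCommGroup M] [Module ℝ M]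
    [AddCommGroup N] [Module ℝ N] {ι : Type*} [Fintype ι] [DecidableEq ι] (f : M [⋀^ι]→ₗ[ℝ] N) :
    ∃ m : MultilinearMap ℝ (fun _ : ι => M) N, alternatization m = f := by
  have hc : ((Fintype.card ι).factorial : ℝ) ≠ 0 := by positivity
  refine ⟨(((Fintype.card ι).factorial : ℝ)⁻¹ • f : M [⋀^ι]→ₗ[ℝ] N), ?_⟩
  rw [AlternatingMap.coe_alternatization, ← Nat.cast_smul_eq_nsmul ℝ, smul_smul,
    mul_inv_cancel₀ hc, one_smul]

theorem wedgeB_eq_alternatization {n k l : ℕ} {V W X : Type*} [AddCommGroup V] [Module ℝ V]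
    [AddCommGroup W] [Module ℝ W] [AddCommGroup X] [Module ℝ X] (β : V →ₗ[ℝ] W →ₗ[ℝ] X)
    {ω : Form n k V} {η : Form n l W} {x : Fin n → ℝ}
    {a : MultilinearMap ℝ (fun _ : Fin k => Fin n → ℝ) V}
    {b : MultilinearMap ℝ (fun _ : Fin l => Fin n → ℝ) W}
    (ha : MultilinearMap.alternatization a = ω x) (hb : MultilinearMap.alternatization b = η x) :
    MultilinearMap.alternatization (MultilinearMap.prodAlong β a b) = wedgeB β ω η x := by
  rw [MultilinearMap.alternatization_prodAlong, ha, hb, wedgeB]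

/-- for `Ψ ∈ Λᵏ(U,𝔥)` and `Φ ∈ Λ¹(U,𝔥)`,
`(Φ∧Φ) ∧^{,} Ψ = Φ ∧^{,} (Φ ∧^[,] Ψ) + α(Φ) ∧^▷ (Φ ∧^{,} Ψ)`. -/
theorem statement_5 {n : ℕ} {U : Set (Fin n → ℝ)} (hU : IsOpen U)
    {𝔤 𝔥 𝔩 : Type*} [NormedRing 𝔤] [NormedAlgebra ℝ 𝔤] [NormedRing 𝔥] [NormedAlgebra ℝ 𝔥]
    [NormedRing 𝔩] [NormedAlgebra ℝ 𝔩] (T : TwoCrossed 𝔤 𝔥 𝔩)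
    {k : ℕ} (Ψ : Form n k 𝔥) (Φ : Form n 1 𝔥)
    (hΨ : SmoothFormOn U Ψ) (hΦ : SmoothFormOn U Φ) :
    ∀ x ∈ U, castD (show 1 + 1 + k = 1 + (1 + k) by omega)
        (wedgeB T.pf (wedgeB (LinearMap.mul ℝ 𝔥) Φ Φ) Ψ) x
      = (wedgeB T.pf Φ (wedgeB (lieB 𝔥) Φ Ψ)
          + wedgeB T.ρ𝔩 (mapV T.α Φ) (wedgeB T.pf Φ Ψ)) x := by
  intro x _
  obtain ⟨f, hf⟩ := (Φ x).exists_alternatization_eq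
  obtain ⟨p, hp⟩ := (Ψ x).exists_alternatization_eq
  have hαf : MultilinearMap.alternatization (T.α.compMultilinearMap f) = mapV T.α Φ x := by
    rw [LinearMap.compMultilinearMap_alternatization, hf, mapV]
  rw [castD, Pi.add_apply,
    ← wedgeB_eq_alternatization T.pf (wedgeB_eq_alternatization (LinearMap.mul ℝ 𝔥) hf hf) hp,
    ← wedgeB_eq_alternatization T.pf hf (wedgeB_eq_alternatization (lieB 𝔥) hf hp),
    ← wedgeB_eq_alternatization T.ρ𝔩 hαf (wedgeB_eq_alternatization T.pf hf hp),
    ← MultilinearMap.alternatization_domDomCongr, ← map_add]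
  have h01 : Fin.castAdd (1 + k) (0 : Fin 1) ≠ Fin.natAdd 1 (Fin.castAdd k (0 : Fin 1)) := by
    simp [Fin.ext_iff]
  refine MultilinearMap.alternatization_eq_of_sub_swap_eq h01 ?_
  refine MultilinearMap.ext fun v => ?_
  have e0 : ∀ i : Fin 1, finCongr (show 1 + 1 + k = 1 + (1 + k) by omega)
      (Fin.castAdd k (Fin.castAdd 1 i)) = Fin.castAdd (1 + k) 0 := fun i => by
    simp [Fin.ext_iff]
  have e1 : ∀ i : Fin 1, finCongr (show 1 + 1 + k = 1 + (1 + k) by omega)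
      (Fin.castAdd k (Fin.natAdd 1 i)) = Fin.natAdd 1 (Fin.castAdd k 0) := fun i => by
    simp [Fin.ext_iff]
  have e2 : ∀ i : Fin k, finCongr (show 1 + 1 + k = 1 + (1 + k) by omega)
      (Fin.natAdd (1 + 1) i) = Fin.natAdd 1 (Fin.natAdd 1 i) := fun i => by
    simp [Fin.ext_iff]; omega
  have hs : ∀ i : Fin k, Equiv.swap (Fin.castAdd (1 + k) (0 : Fin 1))
      (Fin.natAdd 1 (Fin.castAdd k (0 : Fin 1))) (Fin.natAdd 1 (Fin.natAdd 1 i))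
      = Fin.natAdd 1 (Fin.natAdd 1 i) := fun i =>
    Equiv.swap_apply_of_ne_of_ne (by simp [Fin.ext_iff]) (by simp [Fin.ext_iff])
  have hz : ∀ i : Fin 1, i = 0 := fun i => Subsingleton.elim _ _
  simp only [sub_apply, add_apply,
    MultilinearMap.domDomCongr_apply, MultilinearMap.prodAlong_apply, e0, e1, e2, hs, hz,
    Equiv.swap_apply_left, Equiv.swap_apply_right, LinearMap.compMultilinearMap_apply, lieB,
    LinearMap.sub_apply, LinearMap.flip_apply, LinearMap.mul_apply']
  have h4 := T.ax4 (f fun _ => v (Fin.castAdd (1 + k) 0))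
    (f fun _ => v (Fin.natAdd 1 (Fin.castAdd k 0)))
    (p fun i => v (Fin.natAdd 1 (Fin.natAdd 1 i)))
  simp only [Ring.lie_def, map_sub, LinearMap.sub_apply] at h4 ⊢
  rw [h4]
  abel

end
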